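/- Let R be a non-integer real number with R > 0, let m be a natural number, and let q > 0 and x > 0 be real. Then, along the coupled sequence h_N = q x / N, the truncated Grünwald–Letnikov sum of order R of f(x) = x^m converges: lim_{N→∞} (q x/N)^{-R} ∑_{k=0}^{N} (-1)^k C(R,k) (x - k·q x/N)^m = (sin(πR)/π) · Γ(R+1) · q^{-R} · x^{m-R} · ∑_{j=0}^{m} (-1)^j C(m,j) q^{j} / (R - j). -/

import Mathlib

open Finset Filter Real

/-- Generalized binomial coefficient C(R,k) = R(R-1)⋯(R-k+1)/k! for real R and natural k. -/
noncomputable def genBinom (R : ℝ) (k : ℕ) : ℝ :=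
  (∏ i ∈ Finset.range k, (R - i)) / (Nat.factorial k)

/-! The weights `w k = (-1) ^ k * C(R, k)` satisfy `(k + 1) * w (k + 1) = (k - R) * w k`, so their
sum over `k ≤ N` against the falling factorial of degree `j` telescopes to
`(N + 1) * w (N + 1) * N * (N - 1) * ⋯ * (N - j + 1) / (j - R)`. Euler's limit for the Gamma
function says `N ^ R * ((N + 1) * w (N + 1)) → 1 / Γ(-R)`, and falling factorials have the leading
terms of powers, so `N ^ R * ∑ k ≤ N, w k * (k / N) ^ j → 1 / ((j - R) * Γ(-R))`. In other words,
the weights act in the limit as the finite part of `∫ t in 0..1, t ^ (-R - 1) * p t`, divided by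
`Γ(-R)`. Applying this to the Taylor expansion of a polynomial at `x` gives the limit of its
Grünwald–Letnikov sums; for `x ^ m` Euler's reflection formula turns `1 / Γ(-R)` into
`-sin (π * R) / π * Γ(R + 1)`.
-/

section GLWeight

/-- The Grünwald–Letnikov weights of order `R`: the coefficients of `(1 - z) ^ R`, which weight the
values of a function at `x, x - h, x - 2 * h, …` in its fractional difference of order `R`. -/
noncomputable def glWeight (R : ℝ) (k : ℕ) : ℝ := (-1) ^ k * genBinom R k

variable (R : ℝ)

lemma glWeight_eq_prod_div_factorial (k : ℕ) :
    glWeight R k = (∏ i ∈ range k, (-R + i)) / k.factorial := by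
  have hprod : ∏ i ∈ range k, (-R + i) = (-1) ^ k * ∏ i ∈ range k, (R - i) := by
    simpa [neg_add_eq_sub] using prod_neg (s := range k) (fun i : ℕ ↦ R - i)
  rw [glWeight, genBinom, hprod, mul_div_assoc]

lemma succ_mul_glWeight_succ (k : ℕ) :
    (k + 1) * glWeight R (k + 1) = (k - R) * glWeight R k := by
  simp only [glWeight_eq_prod_div_factorial, prod_range_succ, Nat.factorial_succ]
  push_cast
  field_simp
  ring

open Polynomial

lemma sum_glWeight_mul_descPochhammer_eval (j n : ℕ) :
    (j - R) * ∑ k ∈ range n, glWeight R k * (descPochhammer ℝ j).eval (k : ℝ) =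
      n * glWeight R n * (descPochhammer ℝ j).eval (n - 1 : ℝ) := by
  induction n with
  | zero => simp
  | succ n ih =>
    have hshift : n * (descPochhammer ℝ j).eval (n - 1 : ℝ) =
        (descPochhammer ℝ j).eval (n : ℝ) * (n - j) := by
      rw [← descPochhammer_succ_eval, descPochhammer_succ_left]
      simp
    rw [sum_range_succ, mul_add, ih]
    push_cast
    rw [succ_mul_glWeight_succ, add_sub_cancel_right]
    linear_combination glWeight R n * hshift

variable {R}

lemma tendsto_rpow_mul_succ_mul_glWeight_succ (hR : ∀ n : ℕ, R ≠ n) :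
    Tendsto (fun N : ℕ ↦ (N : ℝ) ^ R * ((N + 1) * glWeight R (N + 1))) atTop
      (nhds (Gamma (-R))⁻¹) := by
  have hΓ : Gamma (-R) ≠ 0 := Gamma_ne_zero fun n h ↦ hR n (neg_injective h)
  refine ((GammaSeq_tendsto_Gamma (-R)).inv₀ hΓ).congr fun N ↦ ?_
  rw [GammaSeq, glWeight_eq_prod_div_factorial, Nat.factorial_succ, rpow_neg N.cast_nonneg]
  push_cast
  field_simp

end GLWeight

section PolynomialSums

open Polynomial

lemma tendsto_descPochhammer_eval_div_pow (j : ℕ) :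
    Tendsto (fun N : ℕ ↦ (descPochhammer ℝ j).eval (N : ℝ) / (N : ℝ) ^ j) atTop (nhds 1) := by
  have hdeg : (descPochhammer ℝ j).degree = (X ^ j : ℝ[X]).degree := by
    rw [degree_X_pow, degree_eq_natDegree (monic_descPochhammer ℝ j).ne_zero,
      descPochhammer_natDegree]
  have hlim := (div_tendsto_atTop_leadingCoeff_div_of_degree_eq _ _ hdeg).comp
    tendsto_natCast_atTop_atTop
  simpa [(monic_descPochhammer ℝ j).leadingCoeff, Function.comp_def] using hlim

lemma degree_sub_C_coeff_mul_descPochhammer_lt {A : Type*} [Ring A] [NoZeroDivisors A]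
    [Nontrivial A] {p : A[X]} {d : ℕ} (hp : p.natDegree ≤ d) :
    (p - C (p.coeff d) * descPochhammer A d).degree < d := by
  have hcoeff : (descPochhammer A d).coeff d = 1 := by
    simpa [Monic, leadingCoeff] using monic_descPochhammer A d
  refine (degree_lt_iff_coeff_zero _ _).mpr fun n hn ↦ ?_
  rcases hn.eq_or_lt with rfl | hlt
  · simp [hcoeff]
  · simp [coeff_eq_zero_of_natDegree_lt (hp.trans_lt hlt),
      coeff_eq_zero_of_natDegree_lt ((descPochhammer_natDegree A d).trans_lt hlt)]

variable {R : ℝ} (hR : ∀ n : ℕ, R ≠ n)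
include hR

lemma tendsto_rpow_div_pow_mul_sum_glWeight_mul_descPochhammer_eval (j : ℕ) :
    Tendsto (fun N : ℕ ↦ (N : ℝ) ^ R / (N : ℝ) ^ j *
        ∑ k ∈ range (N + 1), glWeight R k * (descPochhammer ℝ j).eval (k : ℝ)) atTop
      (nhds ((Gamma (-R))⁻¹ / (j - R))) := by
  have hj : (j : ℝ) - R ≠ 0 := sub_ne_zero.mpr (hR j).symm
  have hlim := ((tendsto_rpow_mul_succ_mul_glWeight_succ hR).mul
    (tendsto_descPochhammer_eval_div_pow j)).div_const (j - R)
  rw [mul_one] at hlim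
  refine hlim.congr fun N ↦ ?_
  have hsum := sum_glWeight_mul_descPochhammer_eval R j (N + 1)
  push_cast at hsum
  rw [add_sub_cancel_right] at hsum
  rw [div_eq_iff hj]
  linear_combination -((N : ℝ) ^ R / (N : ℝ) ^ j) * hsum

lemma tendsto_rpow_div_pow_mul_sum_glWeight_mul_eval (d : ℕ) {p : ℝ[X]} (hp : p.natDegree ≤ d) :
    Tendsto (fun N : ℕ ↦ (N : ℝ) ^ R / (N : ℝ) ^ d *
        ∑ k ∈ range (N + 1), glWeight R k * p.eval (k : ℝ)) atTop
      (nhds ((Gamma (-R))⁻¹ * p.coeff d / (d - R))) := by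
  induction d using Nat.strong_induction_on generalizing p with | _ d ih
  set r := p - C (p.coeff d) * descPochhammer ℝ d with hr
  have hr_deg : r.degree < d := degree_sub_C_coeff_mul_descPochhammer_lt hp
  have hr_lim : Tendsto (fun N : ℕ ↦ (N : ℝ) ^ R / (N : ℝ) ^ d *
      ∑ k ∈ range (N + 1), glWeight R k * r.eval (k : ℝ)) atTop (nhds 0) := by
    cases d with
    | zero => simp [show r = 0 by simpa using hr_deg]
    | succ e =>
      have hlim := (ih e e.lt_succ_self (natDegree_le_iff_degree_le.mpr
        (Order.le_of_lt_succ hr_deg))).mul tendsto_inv_atTop_nhds_zero_nat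
      rw [mul_zero] at hlim
      refine hlim.congr fun N ↦ ?_
      rw [pow_succ, ← div_div]
      ring
  have hlim := ((tendsto_rpow_div_pow_mul_sum_glWeight_mul_descPochhammer_eval hR d).const_mul
    (p.coeff d)).add hr_lim
  convert hlim using 2 with N
  · have hp_eval (t : ℝ) : p.eval t = p.coeff d * (descPochhammer ℝ d).eval t + r.eval t := by
      simp [hr]
    simp only [hp_eval, mul_add, sum_add_distrib, mul_left_comm _ (p.coeff d), ← mul_sum]
  · ring

lemma tendsto_rpow_mul_sum_glWeight_mul_eval_div (p : ℝ[X]) :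
    Tendsto (fun N : ℕ ↦ (N : ℝ) ^ R *
        ∑ k ∈ range (N + 1), glWeight R k * p.eval (k / N : ℝ)) atTop
      (nhds ((Gamma (-R))⁻¹ * ∑ j ∈ range (p.natDegree + 1), p.coeff j / (j - R))) := by
  have hlim := tendsto_finsetSum (range (p.natDegree + 1)) fun j _ ↦
    (tendsto_rpow_div_pow_mul_sum_glWeight_mul_eval hR j (natDegree_X_pow_le j)).const_mul
      (p.coeff j)
  convert hlim using 2 with N
  · simp only [eval_eq_sum_range (p := p), eval_pow, eval_X, mul_sum]
    rw [sum_comm]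
    refine sum_congr rfl fun j _ ↦ sum_congr rfl fun k _ ↦ ?_
    rw [div_pow]
    ring
  · rw [mul_sum]
    refine sum_congr rfl fun j _ ↦ ?_
    rw [coeff_X_pow_self]
    ring

end PolynomialSums

section ClosedForm

lemma inv_Gamma_eq_sin_mul_Gamma_one_sub {s : ℝ} (hs : Gamma (1 - s) ≠ 0) :
    (Gamma s)⁻¹ = sin (π * s) / π * Gamma (1 - s) := by
  rw [eq_div_of_mul_eq hs (Gamma_mul_Gamma_one_sub s), inv_div]
  field_simp

lemma neg_inv_Gamma_neg_eq {R : ℝ} (hR : Gamma (R + 1) ≠ 0) :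
    -(Gamma (-R))⁻¹ = sin (π * R) / π * Gamma (R + 1) := by
  have hsub : 1 - -R = R + 1 := by ring
  rw [inv_Gamma_eq_sin_mul_Gamma_one_sub (by rwa [hsub]), hsub, mul_neg, sin_neg]
  ring

lemma inv_Gamma_neg_mul_sum_eq {R : ℝ} (hR : Gamma (R + 1) ≠ 0) (m : ℕ) {q x : ℝ} (hq : 0 ≤ q)
    (hx : 0 < x) :
    (Gamma (-R))⁻¹ * (q * x) ^ (-R) *
        ∑ j ∈ range (m + 1), x ^ (m - j) * m.choose j * (-(q * x)) ^ j / (j - R) =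
      sin (π * R) / π * Gamma (R + 1) * q ^ (-R) * x ^ (m - R) *
        ∑ j ∈ range (m + 1), (-1) ^ j * m.choose j * q ^ j / (R - j) := by
  rw [← neg_inv_Gamma_neg_eq hR, mul_rpow hq hx.le, mul_sum, mul_sum]
  refine sum_congr rfl fun j hj ↦ ?_
  have hpow : x ^ (m - R) = x ^ (-R) * (x ^ (m - j) * x ^ j) := by
    rw [pow_sub_mul_pow x (mem_range_succ_iff.mp hj), sub_eq_neg_add, rpow_add hx, rpow_natCast]
  rw [hpow, ← neg_sub R, div_neg, neg_pow, mul_pow]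
  ring

end ClosedForm

open Polynomial in
theorem coupled_GL_power_limit_general {R : ℝ} (hR : ∀ n : ℕ, R ≠ n) {c : ℝ} (hc : 0 < c) (x : ℝ)
    (p : ℝ[X]) :
    Tendsto (fun N : ℕ ↦ (c / N) ^ (-R) *
        ∑ k ∈ range (N + 1), (-1) ^ k * genBinom R k * p.eval (x - k * (c / N))) atTop
      (nhds ((Gamma (-R))⁻¹ * c ^ (-R) *
        ∑ j ∈ range (p.natDegree + 1), (taylor x p).coeff j * (-c) ^ j / (j - R))) := by
  set s := (taylor x p).comp (C (-c) * X) with hs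
  have hs_eval (k N : ℕ) : s.eval (k / N : ℝ) = p.eval (x - k * (c / N)) := by
    simp only [hs, eval_comp, taylor_eval, eval_mul, eval_C, eval_X]
    ring_nf
  have hs_natDegree : s.natDegree = p.natDegree := by
    rw [hs, natDegree_comp, natDegree_taylor, natDegree_C_mul_X _ (neg_ne_zero.mpr hc.ne'), mul_one]
  have hlim := (tendsto_rpow_mul_sum_glWeight_mul_eval_div hR s).const_mul (c ^ (-R))
  simp only [hs_eval, hs_natDegree, glWeight] at hlim
  simp only [hs, comp_C_mul_X_coeff] at hlim
  convert hlim using 2 with N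
  · rw [div_rpow hc.le N.cast_nonneg, rpow_neg N.cast_nonneg, div_inv_eq_mul, mul_assoc]
  · ring

/-- For non-integer R > 0, natural m, and q, x > 0, the truncated Grünwald–Letnikov
    sum of order R of f(x) = x^m along h_N = qx/N converges to
    (sin(πR)/π) Γ(R+1) q^{-R} x^{m-R} ∑_{j=0}^{m} (-1)^j C(m,j) q^j/(R-j). -/
theorem coupled_GL_power_limit (R : ℝ) (hR : ∀ n : ℤ, R ≠ (n : ℝ)) (hR0 : 0 < R)
    (m : ℕ) (q x : ℝ) (hq : 0 < q) (hx : 0 < x) :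
    Filter.Tendsto
      (fun N : ℕ =>
        (q * x / N) ^ (-R) *
          ∑ k ∈ Finset.range (N + 1),
            (-1 : ℝ) ^ k * genBinom R k * (x - k * (q * x / N)) ^ m)
      Filter.atTop
      (nhds (Real.sin (Real.pi * R) / Real.pi * Real.Gamma (R + 1) * q ^ (-R)
        * x ^ ((m : ℝ) - R)
        * ∑ j ∈ Finset.range (m + 1), (-1 : ℝ) ^ j * (m.choose j : ℝ) * q ^ j / (R - j))) := by
  rw [← inv_Gamma_neg_mul_sum_eq (Gamma_pos_of_pos (by linarith)).ne' m hq.le hx]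
  simpa [Polynomial.coeff_X_add_C_pow] using coupled_GL_power_limit_general
    (fun n ↦ mod_cast hR n) (mul_pos hq hx) x (Polynomial.X ^ m)
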